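/- arXiv:1306.3276 — 5 statements merged into one kernel-verified Lean document; each statement's English description precedes it below -/
import Mathlib

section
/- (Proposition 4.4, norm-function smoothness.) For every even integer p > 2, the norm functional f(v) = ∫_α ‖v(a)‖^p dμ(a) = ‖v‖_{Lp}^p is an infinitely Fréchet differentiable (C^∞) real-valued function on the Banach space Lp(E, p, μ). (This is the k = 0 case of the paper's statement that v ↦ ‖v‖^p is smooth on W^{k,p}(Σ, u_i^*TX); each derivative summand of the W^{k,p} norm is handled by the same argument.) -/
open MeasureTheory
open scoped ENNReal

theorem smooth_pow_aux
    {α : Type*} [MeasurableSpace α] (μ : Measure α)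
    {E : Type*} [NormedAddCommGroup E] [InnerProductSpace ℝ E]
    (m : ℕ) (hm : 1 ≤ m) (p : ℝ≥0∞) (hp : p⁻¹ + p⁻¹ = (m : ℝ≥0∞)⁻¹) [Fact (1 ≤ p)]
    (k : ℕ) (hk : 1 ≤ k) :
    k ≤ m → ∀ (r : ℝ≥0∞) [Fact (1 ≤ r)], r⁻¹ = k * (m : ℝ≥0∞)⁻¹ →
    ∃ Q : Lp E p μ → Lp ℝ r μ, ContDiff ℝ (⊤ : ℕ∞) Q ∧
      ∀ v, Q v =ᵐ[μ] fun a => ‖v a‖ ^ (2 * k) := by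
  induction k, hk using Nat.le_induction with
  | base =>
    intro _ r _ hr
    have : ENNReal.HolderTriple p p r := ⟨by rw [hp, hr]; simp⟩
    refine ⟨fun v => (innerSL ℝ (E := E)).holderL μ p p r v v, ?_, fun v => ?_⟩
    · exact (ContinuousLinearMap.contDiff _).clm_apply contDiff_id
    · filter_upwards [(innerSL ℝ (E := E)).coeFn_holder (r := r) v v] with a ha
      refine ha.trans ?_
      rw [mul_one]
      exact real_inner_self_eq_norm_sq (v a)
  | succ k hk ih =>
    intro hkm r _ hr
    have h1 : (1 : ℝ≥0∞) ≤ (k * (m : ℝ≥0∞)⁻¹)⁻¹ := by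
      rw [ENNReal.one_le_inv, ← div_eq_mul_inv]
      apply ENNReal.div_le_of_le_mul
      rw [one_mul]
      exact_mod_cast (by omega : k ≤ m)
    have : Fact ((1 : ℝ≥0∞) ≤ (k * (m : ℝ≥0∞)⁻¹)⁻¹) := ⟨h1⟩
    have : Fact ((1 : ℝ≥0∞) ≤ m) := ⟨by exact_mod_cast hm⟩
    obtain ⟨Q, hQ, hQe⟩ := ih (by omega) (k * (m : ℝ≥0∞)⁻¹)⁻¹ (by simp)
    have : ENNReal.HolderTriple p p m := ⟨by rw [hp]⟩
    have : ENNReal.HolderTriple (k * (m : ℝ≥0∞)⁻¹)⁻¹ m r :=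
      ⟨by rw [hr, inv_inv]; push_cast; ring⟩
    refine ⟨fun v => (ContinuousLinearMap.mul ℝ ℝ).holderL μ (k * (m : ℝ≥0∞)⁻¹)⁻¹ m r (Q v)
      ((innerSL ℝ (E := E)).holderL μ p p m v v), ?_, fun v => ?_⟩
    · refine ((ContinuousLinearMap.contDiff _).comp hQ).clm_apply ?_
      exact (ContinuousLinearMap.contDiff _).clm_apply contDiff_id
    · filter_upwards [(innerSL ℝ (E := E)).coeFn_holder (r := (m : ℝ≥0∞)) v v, hQe v,
        (ContinuousLinearMap.mul ℝ ℝ).coeFn_holder (r := r) (Q v)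
          ((innerSL ℝ (E := E)).holder (m : ℝ≥0∞) v v)] with a h1 h2 h3
      refine h3.trans ?_
      have h4 := h1.trans (real_inner_self_eq_norm_sq (v a))
      rw [h4, h2, ContinuousLinearMap.mul_apply']
      ring

/-- Proposition 4.4 (norm-function smoothness, `k = 0` case): for an even integer `p > 2`,
the norm functional `v ↦ ∫ ‖v(a)‖^p dμ(a) = ‖v‖_{L^p}^p` is `C^∞` on the Banach space
`L^p(α, μ; E)`. -/
theorem norm_function_smooth
    {α : Type*} [MeasurableSpace α] (μ : Measure α)
    {E : Type*} [NormedAddCommGroup E] [InnerProductSpace ℝ E] [FiniteDimensional ℝ E]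
    (p : ℕ) (hp : 2 < p) (hpe : Even p) [Fact (1 ≤ (p : ℝ≥0∞))] :
    ContDiff ℝ (⊤ : ℕ∞) (fun v : Lp E (p : ℝ≥0∞) μ => ∫ a, ‖v a‖ ^ p ∂μ) := by
  obtain ⟨m, hm⟩ := hpe
  have hm0 : (m : ℝ≥0∞) ≠ 0 := by
    have : m ≠ 0 := by omega
    exact_mod_cast this
  have hpp : (p : ℝ≥0∞)⁻¹ + (p : ℝ≥0∞)⁻¹ = (m : ℝ≥0∞)⁻¹ := by
    have : (p : ℝ≥0∞) = 2 * m := by rw [hm]; push_cast; ring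
    rw [this, ENNReal.mul_inv (by simp) (by simp), ← add_mul, ENNReal.inv_two_add_inv_two,
      one_mul]
  obtain ⟨Q, hQ, hQe⟩ := smooth_pow_aux (E := E) μ m (by omega) p hpp m (by omega) le_rfl 1
    (by rw [ENNReal.mul_inv_cancel hm0 (by simp)]; simp)
  have : (fun v : Lp E (p : ℝ≥0∞) μ => ∫ a, ‖v a‖ ^ p ∂μ) =
      fun v => (L1.integralCLM' ℝ : (Lp ℝ 1 μ) →L[ℝ] ℝ) (Q v) := by
    funext v
    have h : (L1.integralCLM' ℝ : (Lp ℝ 1 μ) →L[ℝ] ℝ) (Q v) = ∫ a, Q v a ∂μ := by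
      rw [← L1.integral_eq', L1.integral_eq_integral]
    rw [h, integral_congr_ae (hQe v), two_mul]
    exact congrArg (fun n : ℕ => ∫ a, ‖v a‖ ^ n ∂μ) hm
  rw [this]
  exact (ContinuousLinearMap.contDiff _).comp hQ
end

section
/- (First derivative formula in the proof of Proposition 4.4.) For every even integer p > 2 and all v, w ∈ Lp(E, p, μ), the function t ↦ f(v + t·w) from ℝ to ℝ is differentiable at t = 0 with derivative D_w f(v) = p · ∫_α ‖v(a)‖^{p−2} ⟨v(a), w(a)⟩ dμ(a), where ⟨·,·⟩ is the inner product of E. -/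
open MeasureTheory
open scoped ENNReal RealInnerProductSpace

/-- First derivative formula in the proof of Proposition 4.4: for an even integer `p > 2`
and `v, w ∈ L^p(α, μ; E)`, the function `t ↦ f(v + t • w)` is differentiable at `t = 0`
with derivative `D_w f(v) = p ∫ ‖v(a)‖^{p-2} ⟪v(a), w(a)⟫ dμ(a)`. -/
theorem first_derivative_formula
    {α : Type*} [MeasurableSpace α] (μ : Measure α)
    {E : Type*} [NormedAddCommGroup E] [InnerProductSpace ℝ E] [FiniteDimensional ℝ E]
    (p : ℕ) (hp : 2 < p) (hpe : Even p) [Fact (1 ≤ (p : ℝ≥0∞))]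
    (v w : Lp E (p : ℝ≥0∞) μ) :
    HasDerivAt (fun t : ℝ => ∫ a, ‖(v + t • w) a‖ ^ p ∂μ)
      ((p : ℝ) * ∫ a, ‖v a‖ ^ (p - 2) * ⟪v a, w a⟫ ∂μ) 0 := by
  obtain ⟨k, hk⟩ := hpe
  have hpk : p = 2 * k := by omega
  have hp0 : p ≠ 0 := by omega
  have hv := Lp.memLp v
  have hw := Lp.memLp w
  have hcongr : (fun t : ℝ => ∫ a, ‖(v + t • w) a‖ ^ p ∂μ)
      = fun t : ℝ => ∫ a, ‖v a + t • w a‖ ^ p ∂μ := by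
    funext t
    apply integral_congr_ae
    filter_upwards [Lp.coeFn_add v (t • w), Lp.coeFn_smul t w] with a h1 h2
    rw [h1, Pi.add_apply, h2, Pi.smul_apply]
  have hmem : ∀ t : ℝ, MemLp (fun a => v a + t • w a) (p : ℝ≥0∞) μ :=
    fun t => hv.add (hw.const_smul t)
  have hb : MemLp (fun a => ‖v a‖ + ‖w a‖) (p : ℝ≥0∞) μ := hv.norm.add hw.norm
  have hbi : Integrable (fun a => (p : ℝ) * (‖v a‖ + ‖w a‖) ^ p) μ := by
    refine Integrable.const_mul ?_ _
    refine (hb.integrable_norm_pow hp0).congr (ae_of_all _ fun a => ?_)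
    simp only [Real.norm_of_nonneg (add_nonneg (norm_nonneg (v a)) (norm_nonneg (w a)))]
  have key := hasDerivAt_integral_of_dominated_loc_of_deriv_le (μ := μ) (x₀ := (0 : ℝ))
    (F := fun t a => ‖v a + t • w a‖ ^ p)
    (F' := fun t a => (p : ℝ) * (‖v a + t • w a‖ ^ (p - 2) * ⟪v a + t • w a, w a⟫))
    (bound := fun a => (p : ℝ) * (‖v a‖ + ‖w a‖) ^ p)
    (Metric.ball_mem_nhds (0 : ℝ) one_pos)
    (Filter.Eventually.of_forall fun t => ((hmem t).1.norm.pow p))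
    ((hmem 0).integrable_norm_pow hp0)
    ((((hmem 0).1.norm.pow (p - 2)).mul ((hmem 0).1.inner hw.1)).const_mul _)
    (ae_of_all _ fun a t ht => ?_) hbi (ae_of_all _ fun a t _ => ?_)
  · rw [hcongr]
    have h2 := key.2
    rw [integral_const_mul] at h2
    simpa only [zero_smul, add_zero] using h2
  · have ht1 : |t| ≤ 1 := by
      have := mem_ball_zero_iff.1 ht
      exact this.le
    have hx : ‖v a + t • w a‖ ≤ ‖v a‖ + ‖w a‖ := by
      refine (norm_add_le _ _).trans ?_
      rw [norm_smul, Real.norm_eq_abs]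
      nlinarith [norm_nonneg (w a)]
    have hy : ‖w a‖ ≤ ‖v a‖ + ‖w a‖ := by linarith [norm_nonneg (v a)]
    have hi : |⟪v a + t • w a, w a⟫| ≤ (‖v a‖ + ‖w a‖) * (‖v a‖ + ‖w a‖) :=
      (abs_real_inner_le_norm _ _).trans (by gcongr)
    have hpp : (‖v a‖ + ‖w a‖) ^ p
        = (‖v a‖ + ‖w a‖) ^ (p - 2) * ((‖v a‖ + ‖w a‖) * (‖v a‖ + ‖w a‖)) := by
      rw [← pow_two, ← pow_add]
      congr 1
      omega
    rw [hpp, norm_mul, norm_mul, norm_pow, norm_norm, Real.norm_natCast, Real.norm_eq_abs]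
    gcongr
  · have h1 : HasDerivAt (fun s : ℝ => v a + s • w a) (w a) t := by
      simpa using ((hasDerivAt_id t).smul_const (w a)).const_add (v a)
    have h2 := (h1.norm_sq).pow k
    have hp2 : p - 2 = 2 * (k - 1) := by omega
    rw [hp2]
    subst hpk
    simp only [pow_mul]
    refine HasDerivAt.congr_deriv (f := fun x : ℝ => (‖v a + x • w a‖ ^ 2) ^ k) h2 ?_
    push_cast
    ring
end

section
/- (Second derivative formula in the proof of Proposition 4.4.) For every even integer p > 2 and all v, w₁, w₂ ∈ Lp(E, p, μ), the function (s, t) ↦ f(v + s·w₁ + t·w₂) has mixed second partial derivative at (s, t) = (0, 0) equal to D_{w₁}D_{w₂} f(v) = ∫_α [ p ‖v(a)‖^{p−2} ⟨w₁(a), w₂(a)⟩ + p(p−2) ‖v(a)‖^{p−4} ⟨v(a), w₁(a)⟩ ⟨v(a), w₂(a)⟩ ] dμ(a), where for p = 4 the second summand of the integrand is interpreted as 0 at points a with v(a) = 0. -/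
open MeasureTheory
open scoped ENNReal RealInnerProductSpace

section helpers

variable {α : Type*} [MeasurableSpace α] {μ : Measure α}
    {E : Type*} [NormedAddCommGroup E] [InnerProductSpace ℝ E]

theorem aux_line (x y : E) (t : ℝ) : HasDerivAt (fun t : ℝ => x + t • y) y t := by
  simpa using ((hasDerivAt_id t).smul_const y).const_add x

theorem aux_pow (m : ℕ) (x y : E) (t : ℝ) :
    HasDerivAt (fun t : ℝ => ‖x + t • y‖ ^ (2 * m + 2))
      ((2 * m + 2 : ℝ) * ‖x + t • y‖ ^ (2 * m) * ⟪x + t • y, y⟫) t := by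
  have h := ((aux_line x y t).norm_sq).pow (m + 1)
  have e : (fun t : ℝ => ‖x + t • y‖ ^ (2 * m + 2)) =
      (fun t : ℝ => ‖x + t • y‖ ^ 2) ^ (m + 1) := by
    funext t
    simp only [Pi.pow_apply]
    rw [← pow_mul]; congr 1
  rw [e]
  refine h.congr_deriv ?_
  simp only [Nat.add_sub_cancel, ← pow_mul]
  push_cast
  ring

theorem aux_pow2 (m : ℕ) (x y z : E) (t : ℝ) :
    HasDerivAt (fun t : ℝ => (2 * m + 4 : ℝ) * ‖x + t • y‖ ^ (2 * m + 2) * ⟪x + t • y, z⟫)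
      ((2 * m + 4 : ℝ) * ‖x + t • y‖ ^ (2 * m + 2) * ⟪y, z⟫ +
        (2 * m + 4 : ℝ) * (2 * m + 2) * ‖x + t • y‖ ^ (2 * m) * ⟪x + t • y, y⟫
          * ⟪x + t • y, z⟫) t := by
  have h1 := (aux_pow m x y t).const_mul (2 * m + 4 : ℝ)
  have h2 : HasDerivAt (fun t : ℝ => ⟪x + t • y, z⟫) ⟪y, z⟫ t := by
    simpa using (aux_line x y t).inner ℝ (hasDerivAt_const t z)
  refine (h1.mul h2).congr_deriv ?_
  ring

theorem aux_inner {x y : E} {M N : ℝ} (hx : ‖x‖ ≤ M) (hy : ‖y‖ ≤ N) : |⟪x, y⟫| ≤ M * N :=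
  (abs_real_inner_le_norm x y).trans
    (mul_le_mul hx hy (norm_nonneg _) ((norm_nonneg _).trans hx))

theorem aux_bd1 (m : ℕ) {x y : E} {M : ℝ} (hx : ‖x‖ ≤ M) (hy : ‖y‖ ≤ M) :
    ‖(2 * m + 4 : ℝ) * ‖x‖ ^ (2 * m + 2) * ⟪x, y⟫‖ ≤ (2 * m + 4 : ℝ) * M ^ (2 * m + 4) := by
  have hM : 0 ≤ M := (norm_nonneg _).trans hx
  have h1 := aux_inner hx hy
  have h2 : ‖x‖ ^ (2 * m + 2) ≤ M ^ (2 * m + 2) := by gcongr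
  rw [Real.norm_eq_abs, abs_mul, abs_of_nonneg (by positivity)]
  calc _ ≤ (2 * m + 4 : ℝ) * M ^ (2 * m + 2) * (M * M) := by gcongr
    _ = _ := by ring

theorem aux_bd2 (m : ℕ) {x y z : E} {M : ℝ} (hx : ‖x‖ ≤ M) (hy : ‖y‖ ≤ M) (hz : ‖z‖ ≤ M) :
    ‖(2 * m + 4 : ℝ) * ‖x‖ ^ (2 * m + 2) * ⟪y, z⟫ +
        (2 * m + 4 : ℝ) * (2 * m + 2) * ‖x‖ ^ (2 * m) * ⟪x, y⟫ * ⟪x, z⟫‖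
      ≤ ((2 * m + 4 : ℝ) + (2 * m + 4 : ℝ) * (2 * m + 2)) * M ^ (2 * m + 4) := by
  have hM : 0 ≤ M := (norm_nonneg _).trans hx
  have h1 := aux_inner hx hy
  have h3 := aux_inner hx hz
  have h4 := aux_inner hy hz
  refine (norm_add_le _ _).trans ?_
  simp only [Real.norm_eq_abs, abs_mul, abs_pow, abs_norm]
  rw [abs_of_nonneg (by positivity : (0:ℝ) ≤ 2 * m + 4),
    abs_of_nonneg (by positivity : (0:ℝ) ≤ 2 * m + 2)]
  calc _ ≤ (2 * m + 4 : ℝ) * M ^ (2 * m + 2) * (M * M) +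
        (2 * m + 4 : ℝ) * (2 * m + 2) * M ^ (2 * m) * (M * M) * (M * M) := by gcongr
    _ = _ := by ring

theorem aux_norm {x y : E} {t : ℝ} (ht : t ∈ Metric.ball (0 : ℝ) 1) :
    ‖x + t • y‖ ≤ ‖x‖ + ‖y‖ := by
  have ht' : ‖t‖ ≤ 1 := by simpa using (Metric.mem_ball.1 ht).le
  refine (norm_add_le _ _).trans ?_
  rw [norm_smul]
  gcongr
  exact mul_le_of_le_one_left (norm_nonneg _) ht'

theorem aux_int {f : α → ℝ} (n : ℕ) (hn : n ≠ 0) (hf : MemLp f (n : ℝ≥0∞) μ)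
    (h0 : ∀ a, 0 ≤ f a) : Integrable (fun a => f a ^ n) μ := by
  have := hf.integrable_norm_pow hn
  refine this.congr (ae_of_all _ fun a => ?_)
  simp [abs_of_nonneg (h0 a)]

theorem aux_D1 (m : ℕ) {u w : α → E} (hu : MemLp u ((2 * m + 4 : ℕ) : ℝ≥0∞) μ)
    (hw : MemLp w ((2 * m + 4 : ℕ) : ℝ≥0∞) μ) :
    HasDerivAt (fun t : ℝ => ∫ a, ‖u a + t • w a‖ ^ (2 * m + 4) ∂μ)
      (∫ a, (2 * m + 4 : ℝ) * ‖u a‖ ^ (2 * m + 2) * ⟪u a, w a⟫ ∂μ) 0 := by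
  have key := hasDerivAt_integral_of_dominated_loc_of_deriv_le (μ := μ) (𝕜 := ℝ)
    (F := fun t a => ‖u a + t • w a‖ ^ (2 * m + 4))
    (F' := fun t a => (2 * m + 4 : ℝ) * ‖u a + t • w a‖ ^ (2 * m + 2) * ⟪u a + t • w a, w a⟫)
    (x₀ := (0 : ℝ)) (bound := fun a => (2 * m + 4 : ℝ) * (‖u a‖ + ‖w a‖) ^ (2 * m + 4))
    (Metric.ball_mem_nhds (0 : ℝ) one_pos)
    (Filter.Eventually.of_forall fun t =>
      ((hu.1.add (hw.1.const_smul t)).norm.pow (2 * m + 4)))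
    (by simpa using hu.integrable_norm_pow (by omega))
    (((((hu.1.add (hw.1.const_smul 0)).norm.pow (2 * m + 2)).const_mul _)).mul
      ((hu.1.add (hw.1.const_smul 0)).inner hw.1))
    (ae_of_all _ fun a t ht => aux_bd1 m (aux_norm ht) (by linarith [norm_nonneg (u a)]))
    ((aux_int _ (by omega) (hu.norm.add hw.norm) fun a => by
      simp only [Pi.add_apply]; positivity).const_mul _)
    (ae_of_all _ fun a t ht => by
      have := aux_pow (m + 1) (u a) (w a) t
      refine this.congr_deriv ?_
      push_cast
      rw [mul_add]; ring)
  simpa using key.2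

theorem aux_D2 (m : ℕ) {u w z : α → E} (hu : MemLp u ((2 * m + 4 : ℕ) : ℝ≥0∞) μ)
    (hw : MemLp w ((2 * m + 4 : ℕ) : ℝ≥0∞) μ) (hz : MemLp z ((2 * m + 4 : ℕ) : ℝ≥0∞) μ) :
    HasDerivAt (fun t : ℝ => ∫ a, (2 * m + 4 : ℝ) * ‖u a + t • w a‖ ^ (2 * m + 2)
        * ⟪u a + t • w a, z a⟫ ∂μ)
      (∫ a, (2 * m + 4 : ℝ) * ‖u a‖ ^ (2 * m + 2) * ⟪w a, z a⟫ +
        (2 * m + 4 : ℝ) * (2 * m + 2) * ‖u a‖ ^ (2 * m) * ⟪u a, w a⟫ * ⟪u a, z a⟫ ∂μ) 0 := by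
  have hb : Integrable (fun a => (‖u a‖ + ‖w a‖ + ‖z a‖) ^ (2 * m + 4)) μ :=
    aux_int _ (by omega) ((hu.norm.add hw.norm).add hz.norm) fun a => by
      positivity
  have hadd : ∀ t : ℝ, AEStronglyMeasurable (fun a => u a + t • w a) μ := fun t =>
    hu.1.add (hw.1.const_smul t)
  have hm : ∀ t : ℝ, AEStronglyMeasurable (fun a =>
      (2 * m + 4 : ℝ) * ‖u a + t • w a‖ ^ (2 * m + 2) * ⟪u a + t • w a, z a⟫) μ := fun t =>
    (((hadd t).norm.pow (2 * m + 2)).const_mul _).mul ((hadd t).inner hz.1)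
  have key := hasDerivAt_integral_of_dominated_loc_of_deriv_le (μ := μ) (𝕜 := ℝ)
    (F := fun t a => (2 * m + 4 : ℝ) * ‖u a + t • w a‖ ^ (2 * m + 2) * ⟪u a + t • w a, z a⟫)
    (F' := fun t a => (2 * m + 4 : ℝ) * ‖u a + t • w a‖ ^ (2 * m + 2) * ⟪w a, z a⟫ +
        (2 * m + 4 : ℝ) * (2 * m + 2) * ‖u a + t • w a‖ ^ (2 * m) * ⟪u a + t • w a, w a⟫
          * ⟪u a + t • w a, z a⟫)
    (x₀ := (0 : ℝ)) (bound := fun a => ((2 * m + 4 : ℝ) + (2 * m + 4 : ℝ) * (2 * m + 2)) *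
      (‖u a‖ + ‖w a‖ + ‖z a‖) ^ (2 * m + 4))
    (Metric.ball_mem_nhds (0 : ℝ) one_pos)
    (Filter.Eventually.of_forall hm)
    ((hb.const_mul (2 * m + 4 : ℝ)).mono' (hm 0) (ae_of_all _ fun a => aux_bd1 m
      (by simpa using by linarith [norm_nonneg (w a), norm_nonneg (z a)])
      (by linarith [norm_nonneg (u a), norm_nonneg (w a)])))
    (((((hadd 0).norm.pow (2 * m + 2)).const_mul _).mul (hw.1.inner hz.1)).add
      (((((hadd 0).norm.pow (2 * m)).const_mul _).mul ((hadd 0).inner hw.1)).mul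
        ((hadd 0).inner hz.1)))
    (ae_of_all _ fun a t ht => aux_bd2 m
      ((aux_norm ht).trans (by linarith [norm_nonneg (z a)]))
      (by linarith [norm_nonneg (u a), norm_nonneg (z a)])
      (by linarith [norm_nonneg (u a), norm_nonneg (w a)]))
    (hb.const_mul _)
    (ae_of_all _ fun a t ht => aux_pow2 m (u a) (w a) (z a) t)
  simpa using key.2

end helpers

/-- Second derivative formula in the proof of Proposition 4.4: for an even integer `p > 2`
and `v, w₁, w₂ ∈ L^p(α, μ; E)`, the function `(s, t) ↦ f(v + s • w₁ + t • w₂)` has mixed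
second partial derivative at `(0, 0)` equal to
`D_{w₁}D_{w₂} f(v) = ∫ [ p ‖v‖^{p-2} ⟪w₁, w₂⟫ + p(p-2) ‖v‖^{p-4} ⟪v, w₁⟫ ⟪v, w₂⟫ ] dμ`
(for `p = 4` the second summand of the integrand vanishes where `v(a) = 0`, since the inner
products `⟪v(a), wᵢ(a)⟫` vanish there; the `ℕ`-power `‖v(a)‖^{p-4} = 0^0 = 1` convention
realizes this interpretation). -/
theorem second_derivative_formula
    {α : Type*} [MeasurableSpace α] (μ : Measure α)
    {E : Type*} [NormedAddCommGroup E] [InnerProductSpace ℝ E] [FiniteDimensional ℝ E]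
    (p : ℕ) (hp : 2 < p) (hpe : Even p) [Fact (1 ≤ (p : ℝ≥0∞))]
    (v w₁ w₂ : Lp E (p : ℝ≥0∞) μ) :
    HasDerivAt
      (fun s : ℝ =>
        deriv (fun t : ℝ => ∫ a, ‖(v + s • w₁ + t • w₂) a‖ ^ p ∂μ) 0)
      (∫ a, (p : ℝ) * ‖v a‖ ^ (p - 2) * ⟪w₁ a, w₂ a⟫
          + (p : ℝ) * ((p : ℝ) - 2) * ‖v a‖ ^ (p - 4) * ⟪v a, w₁ a⟫ * ⟪v a, w₂ a⟫ ∂μ)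
      0 := by
  obtain ⟨m, rfl⟩ : ∃ m, p = 2 * m + 4 := by
    obtain ⟨k, rfl⟩ := hpe
    exact ⟨k - 2, by omega⟩
  have hv := Lp.memLp v
  have h1 := Lp.memLp w₁
  have h2 := Lp.memLp w₂
  have e : (fun s : ℝ =>
      deriv (fun t : ℝ => ∫ a, ‖(v + s • w₁ + t • w₂) a‖ ^ (2 * m + 4) ∂μ) 0) =
      fun s : ℝ => ∫ a, (2 * m + 4 : ℝ) * ‖v a + s • w₁ a‖ ^ (2 * m + 2)
        * ⟪v a + s • w₁ a, w₂ a⟫ ∂μ := by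
    funext s
    refine Eq.trans ?_ (aux_D1 m (hv.add (h1.const_smul s)) h2).deriv
    congr 1
    funext t
    refine integral_congr_ae ?_
    filter_upwards [Lp.coeFn_add (v + s • w₁) (t • w₂), Lp.coeFn_add v (s • w₁),
      Lp.coeFn_smul s w₁, Lp.coeFn_smul t w₂] with a e1 e2 e3 e4
    simp only [e1, e2, e3, e4, Pi.add_apply, Pi.smul_apply]
  rw [e]
  convert aux_D2 m hv h1 h2 using 5 with a
  · push_cast; rfl
  · push_cast; ring
end

section
/- (Continuity of the first derivative, asserted in the proof of Proposition 4.4.) For every even integer p > 2, the map sending v ∈ Lp(E, p, μ) to the continuous linear functional w ↦ p ∫_α ‖v(a)‖^{p−2} ⟨v(a), w(a)⟩ dμ(a) is a continuous map from Lp(E, p, μ) to its continuous dual space (equipped with the operator norm); moreover each such functional has operator norm at most p ‖v‖_{Lp}^{p−1}. -/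
open MeasureTheory
open scoped ENNReal RealInnerProductSpace

lemma holder_aux {α : Type*} [MeasurableSpace α] (μ : Measure α)
    (p : ℕ) (hp : 2 < p) {f g h : α → ℝ≥0∞} (hf : AEMeasurable f μ) (hg : AEMeasurable g μ)
    (hh : AEMeasurable h μ) :
    ∫⁻ a, f a ^ (p - 2) * g a * h a ∂μ ≤
      eLpNorm f p μ ^ (p - 2) * eLpNorm g p μ * eLpNorm h p μ := by
  have hp0 : (p : ℝ) ≠ 0 := by positivity
  have hp2 : ((p - 2 : ℕ) : ℝ) = p - 2 := by
    rw [Nat.cast_sub hp.le]; norm_num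
  have key := ENNReal.lintegral_prod_norm_pow_le (μ := μ) (Finset.univ : Finset (Fin 3))
    (f := ![fun a => f a ^ (p : ℝ), fun a => g a ^ (p : ℝ), fun a => h a ^ (p : ℝ)])
    (by
      intro i _
      fin_cases i
      · exact hf.pow_const _
      · exact hg.pow_const _
      · exact hh.pow_const _)
    (p := ![((p - 2 : ℕ) : ℝ) / p, 1 / p, 1 / p])
    (by
      simp only [Fin.sum_univ_three, Matrix.cons_val]
      rw [hp2]; field_simp; ring)
    (by
      intro i _
      fin_cases i <;> simp <;> positivity)
  simp only [Fin.prod_univ_three, Matrix.cons_val] at key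
  have e : ∀ F : α → ℝ≥0∞, eLpNorm F p μ = (∫⁻ a, F a ^ (p : ℝ) ∂μ) ^ (1 / (p : ℝ)) := by
    intro F
    rw [eLpNorm_eq_lintegral_rpow_enorm_toReal (by exact_mod_cast (by omega)) (by simp)]
    simp
  rw [e f, e g, e h, ← ENNReal.rpow_natCast, ← ENNReal.rpow_mul]
  rw [one_div_mul_eq_div]
  refine le_trans (le_of_eq ?_) key
  congr 1
  ext a
  simp only [← ENNReal.rpow_mul]
  rw [mul_div_cancel₀ _ hp0, mul_one_div_cancel hp0, ENNReal.rpow_one, ENNReal.rpow_one,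
    ENNReal.rpow_natCast]

lemma holder_real {α : Type*} [MeasurableSpace α] {μ : Measure α}
    {E F G : Type*} [NormedAddCommGroup E] [NormedAddCommGroup F] [NormedAddCommGroup G]
    (p : ℕ) (hp : 2 < p) {f : α → E} {g : α → F} {h : α → G}
    (hf : MemLp f p μ) (hg : MemLp g p μ) (hh : MemLp h p μ) :
    Integrable (fun a => ‖f a‖ ^ (p - 2) * ‖g a‖ * ‖h a‖) μ ∧
    ∫ a, ‖f a‖ ^ (p - 2) * ‖g a‖ * ‖h a‖ ∂μ ≤
      (eLpNorm f p μ).toReal ^ (p - 2) * (eLpNorm g p μ).toReal * (eLpNorm h p μ).toReal := by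
  have key := holder_aux μ p hp hf.1.enorm hg.1.enorm hh.1.enorm
  simp only [eLpNorm_enorm] at key
  have hm : AEStronglyMeasurable (fun a => ‖f a‖ ^ (p - 2) * ‖g a‖ * ‖h a‖) μ :=
    ((hf.1.norm.pow _).mul hg.1.norm).mul hh.1.norm
  have hfin : eLpNorm f p μ ^ (p - 2) * eLpNorm g p μ * eLpNorm h p μ ≠ ∞ :=
    ENNReal.mul_ne_top (ENNReal.mul_ne_top (ENNReal.pow_ne_top hf.2.ne) hg.2.ne) hh.2.ne
  have he : ∀ a, ‖‖f a‖ ^ (p - 2) * ‖g a‖ * ‖h a‖‖ₑ = ‖f a‖ₑ ^ (p - 2) * ‖g a‖ₑ * ‖h a‖ₑ := by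
    intro a
    simp [enorm_mul, enorm_pow]
  refine ⟨⟨hm, ?_⟩, ?_⟩
  · rw [hasFiniteIntegral_iff_enorm]
    simp only [he]
    exact key.trans_lt hfin.lt_top
  · rw [integral_eq_lintegral_of_nonneg_ae (.of_forall fun a => by positivity) hm]
    rw [← ENNReal.toReal_pow, ← ENNReal.toReal_mul, ← ENNReal.toReal_mul]
    refine ENNReal.toReal_mono hfin (le_trans (le_of_eq ?_) key)
    congr 1
    ext a
    rw [← he, Real.enorm_eq_ofReal (by positivity)]

lemma pow_lip (x y : ℝ) (hx : 0 ≤ x) (hy : 0 ≤ y) (k : ℕ) :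
    |x ^ k - y ^ k| * y ≤ k * |x - y| * (x + y) ^ k := by
  induction k with
  | zero => simp
  | succ k ih =>
    have h1 : x ^ (k+1) - y ^ (k+1) = x ^ k * (x - y) + (x ^ k - y ^ k) * y := by ring
    have h2 : |x ^ (k+1) - y ^ (k+1)| ≤ x ^ k * |x - y| + |x ^ k - y ^ k| * y := by
      rw [h1]
      refine (abs_add_le _ _).trans (le_of_eq ?_)
      rw [abs_mul, abs_mul, abs_of_nonneg hy, abs_of_nonneg (pow_nonneg hx k)]
    have h3 : x ^ k ≤ (x + y) ^ k := by gcongr; linarith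
    have h4 : |x ^ (k+1) - y ^ (k+1)| ≤ (k + 1) * |x - y| * (x + y) ^ k := by
      have := mul_le_mul_of_nonneg_right h3 (abs_nonneg (x - y))
      linarith
    calc _ ≤ ((k + 1) * |x - y| * (x + y) ^ k) * (x + y) := by
          gcongr; linarith
      _ = _ := by push_cast; ring

lemma duality_lip {E : Type*} [NormedAddCommGroup E] [InnerProductSpace ℝ E] (k : ℕ) (x y w : E) :
    |‖x‖ ^ k * ⟪x, w⟫ - ‖y‖ ^ k * ⟪y, w⟫| ≤
      (k + 1) * (‖(‖x‖ + ‖y‖)‖ ^ k * ‖x - y‖ * ‖w‖) := by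
  have e : ‖x‖ ^ k * ⟪x, w⟫ - ‖y‖ ^ k * ⟪y, w⟫
      = ‖x‖ ^ k * ⟪x - y, w⟫ + (‖x‖ ^ k - ‖y‖ ^ k) * ⟪y, w⟫ := by
    rw [inner_sub_left]; ring
  have h0 : ‖(‖x‖ + ‖y‖)‖ = ‖x‖ + ‖y‖ := Real.norm_of_nonneg (by positivity)
  rw [e, h0]
  have h1 := abs_real_inner_le_norm (x - y) w
  have h2 := abs_real_inner_le_norm y w
  have h3 := pow_lip ‖x‖ ‖y‖ (norm_nonneg _) (norm_nonneg _) k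
  have h4 := abs_norm_sub_norm_le x y
  calc _ ≤ ‖x‖ ^ k * |⟪x - y, w⟫| + |‖x‖ ^ k - ‖y‖ ^ k| * |⟪y, w⟫| := by
        refine (abs_add_le _ _).trans (le_of_eq ?_)
        rw [abs_mul, abs_mul, abs_of_nonneg (pow_nonneg (norm_nonneg x) k)]
    _ ≤ (‖x‖ + ‖y‖) ^ k * (‖x - y‖ * ‖w‖) + |‖x‖ ^ k - ‖y‖ ^ k| * (‖y‖ * ‖w‖) := by
        gcongr
        linarith [norm_nonneg y]
    _ = (‖x‖ + ‖y‖) ^ k * (‖x - y‖ * ‖w‖) + (|‖x‖ ^ k - ‖y‖ ^ k| * ‖y‖) * ‖w‖ := by ring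
    _ ≤ (‖x‖ + ‖y‖) ^ k * (‖x - y‖ * ‖w‖) + (k * ‖x - y‖ * (‖x‖ + ‖y‖) ^ k) * ‖w‖ := by
        refine add_le_add_right (mul_le_mul_of_nonneg_right (h3.trans ?_) (norm_nonneg w)) _
        gcongr
    _ = _ := by ring

/-- Continuity of the first derivative, asserted in the proof of Proposition 4.4: the map
sending `v ∈ L^p(α, μ; E)` to the continuous linear functional
`w ↦ p ∫ ‖v(a)‖^{p-2} ⟪v(a), w(a)⟫ dμ(a)` is a continuous map from `L^p` into its
continuous dual (with the operator norm), and each such functional has operator norm at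
most `p ‖v‖_{L^p}^{p-1}`. -/
theorem first_derivative_continuous
    {α : Type*} [MeasurableSpace α] (μ : Measure α)
    {E : Type*} [NormedAddCommGroup E] [InnerProductSpace ℝ E] [FiniteDimensional ℝ E]
    (p : ℕ) (hp : 2 < p) (hpe : Even p) [Fact (1 ≤ (p : ℝ≥0∞))] :
    ∃ T : Lp E (p : ℝ≥0∞) μ → (Lp E (p : ℝ≥0∞) μ →L[ℝ] ℝ),
      Continuous T ∧
      (∀ v w : Lp E (p : ℝ≥0∞) μ,
        T v w = (p : ℝ) * ∫ a, ‖v a‖ ^ (p - 2) * ⟪v a, w a⟫ ∂μ) ∧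
      (∀ v : Lp E (p : ℝ≥0∞) μ, ‖T v‖ ≤ (p : ℝ) * ‖v‖ ^ (p - 1)) := by
  have hbd : ∀ (v w : Lp E (p : ℝ≥0∞) μ) (a : α),
      ‖‖v a‖ ^ (p - 2) * ⟪v a, w a⟫‖ ≤ ‖v a‖ ^ (p - 2) * ‖v a‖ * ‖w a‖ := by
    intro v w a
    rw [norm_mul, norm_pow, norm_norm, mul_assoc]
    gcongr
    exact norm_inner_le_norm _ _
  have hint : ∀ v w : Lp E (p : ℝ≥0∞) μ,
      Integrable (fun a => ‖v a‖ ^ (p - 2) * ⟪v a, w a⟫) μ := by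
    intro v w
    refine (holder_real p hp (Lp.memLp v) (Lp.memLp v) (Lp.memLp w)).1.mono' ?_
      (.of_forall (hbd v w))
    exact ((Lp.aestronglyMeasurable v).norm.pow _).mul
      ((Lp.aestronglyMeasurable v).inner (Lp.aestronglyMeasurable w))
  let L : Lp E (p : ℝ≥0∞) μ → (Lp E (p : ℝ≥0∞) μ →ₗ[ℝ] ℝ) := fun v =>
    { toFun := fun w => (p : ℝ) * ∫ a, ‖v a‖ ^ (p - 2) * ⟪v a, w a⟫ ∂μ
      map_add' := by
        intro w₁ w₂
        rw [← mul_add, ← integral_add (hint v w₁) (hint v w₂)]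
        congr 1
        apply integral_congr_ae
        filter_upwards [Lp.coeFn_add w₁ w₂] with a ha
        rw [ha, Pi.add_apply, inner_add_right, mul_add]
      map_smul' := by
        intro c w
        simp only [RingHom.id_apply, smul_eq_mul]
        rw [mul_left_comm, ← integral_const_mul c]
        congr 1
        apply integral_congr_ae
        filter_upwards [Lp.coeFn_smul c w] with a ha
        rw [ha, Pi.smul_apply, inner_smul_right]
        ring }
  have hL : ∀ v w, ‖L v w‖ ≤ ((p : ℝ) * ‖v‖ ^ (p - 1)) * ‖w‖ := by
    intro v w
    have h := holder_real p hp (Lp.memLp v) (Lp.memLp v) (Lp.memLp w)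
    have h2 := (norm_integral_le_of_norm_le h.1 (.of_forall (hbd v w))).trans h.2
    rw [← Lp.norm_def, ← Lp.norm_def, ← pow_succ, show p - 2 + 1 = p - 1 by omega] at h2
    change ‖(p : ℝ) * ∫ a, ‖v a‖ ^ (p - 2) * ⟪v a, w a⟫ ∂μ‖ ≤ _
    rw [norm_mul, Real.norm_natCast, mul_assoc]
    gcongr
  let T : Lp E (p : ℝ≥0∞) μ → (Lp E (p : ℝ≥0∞) μ →L[ℝ] ℝ) := fun v =>
    (L v).mkContinuous _ (hL v)
  have hT : ∀ v w, T v w = (p : ℝ) * ∫ a, ‖v a‖ ^ (p - 2) * ⟪v a, w a⟫ ∂μ := fun v w => rfl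
  refine ⟨T, ?_, hT, fun v => (L v).mkContinuous_norm_le (by positivity) _⟩
  have hlip : ∀ u v, ‖T u - T v‖ ≤
      (p : ℝ) * (((p - 2 : ℕ) + 1) * ((‖u‖ + ‖v‖) ^ (p - 2) * ‖u - v‖)) := by
    intro u v
    refine ContinuousLinearMap.opNorm_le_bound _ (by positivity) fun w => ?_
    have hs : MemLp (fun a => ‖u a‖ + ‖v a‖) p μ := (Lp.memLp u).norm.add (Lp.memLp v).norm
    have hd : MemLp (fun a => u a - v a) p μ := (Lp.memLp u).sub (Lp.memLp v)
    have h := holder_real p hp hs hd (Lp.memLp w)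
    have hsn : (eLpNorm (fun a => ‖u a‖ + ‖v a‖) p μ).toReal ≤ ‖u‖ + ‖v‖ := by
      rw [Lp.norm_def, Lp.norm_def,
        ← ENNReal.toReal_add (Lp.eLpNorm_ne_top u) (Lp.eLpNorm_ne_top v)]
      refine ENNReal.toReal_mono
        (ENNReal.add_ne_top.2 ⟨Lp.eLpNorm_ne_top u, Lp.eLpNorm_ne_top v⟩) ?_
      have := eLpNorm_add_le (Lp.memLp u).1.norm (Lp.memLp v).1.norm
        (Fact.out : 1 ≤ (p : ℝ≥0∞))
      rw [eLpNorm_norm, eLpNorm_norm] at this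
      exact this
    have hdn : (eLpNorm (fun a => u a - v a) p μ).toReal = ‖u - v‖ := by
      rw [Lp.norm_def]
      congr 1
      exact (eLpNorm_congr_ae (Lp.coeFn_sub u v)).symm
    rw [hdn, ← Lp.norm_def] at h
    rw [ContinuousLinearMap.sub_apply, hT, hT, ← mul_sub, ← integral_sub (hint u w) (hint v w),
      norm_mul, Real.norm_natCast, mul_assoc]
    gcongr
    refine (norm_integral_le_of_norm_le (h.1.const_mul (((p - 2 : ℕ) : ℝ) + 1))
      (.of_forall fun a => duality_lip (p - 2) (u a) (v a) (w a))).trans ?_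
    rw [integral_const_mul, mul_assoc]
    refine mul_le_mul_of_nonneg_left (h.2.trans ?_) (by positivity)
    gcongr
  rw [continuous_iff_continuousAt]
  intro v
  refine (tendsto_iff_norm_sub_tendsto_zero (E := Lp E (p : ℝ≥0∞) μ →L[ℝ] ℝ) (f := T) (b := T v)).2 ?_
  refine squeeze_zero (fun u => norm_nonneg (T u - T v)) (fun u => hlip u v) ?_
  have hc : Continuous fun u : Lp E (p : ℝ≥0∞) μ =>
      (p : ℝ) * (((p - 2 : ℕ) + 1) * ((‖u‖ + ‖v‖) ^ (p - 2) * ‖u - v‖)) := by fun_prop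
  simpa using hc.tendsto v
end

section
/- (Existence of smooth cut-off functions, Remark 4.5; this fulfils Assumption 3.1/3.6 for the local stabilizations.) For every even integer p > 2 and every ε > 0, there exists an infinitely Fréchet differentiable function β : Lp(E, p, μ) → ℝ with values in [0, 1] such that β(v) = 1 whenever ‖v‖_{Lp} < ε/3 and β(v) = 0 whenever ‖v‖_{Lp} > 2ε/3. -/
open MeasureTheory
open scoped ENNReal

lemma cutoff_aux
    {α : Type*} [MeasurableSpace α] (μ : Measure α)
    {E : Type*} [NormedAddCommGroup E] [InnerProductSpace ℝ E]
    (p m : ℕ) (hm : 1 ≤ m) (hpm : p = m + m) [Fact (1 ≤ (p : ℝ≥0∞))] (k : ℕ) :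
    ∀ (q : ℝ≥0∞) [Fact (1 ≤ q)], q⁻¹ = (k : ℝ≥0∞) * (m : ℝ≥0∞)⁻¹ →
      ∃ f : Lp E (p : ℝ≥0∞) μ → Lp ℝ q μ, ContDiff ℝ (⊤ : ℕ∞) f ∧
        ∀ v, f v =ᵐ[μ] fun x => ‖v x‖ ^ (2 * k) := by
  induction k with
  | zero =>
    intro q _ hq
    have hq' : q = ∞ := by simpa using hq
    subst hq'
    refine ⟨fun _ => (memLp_top_const (1 : ℝ)).toLp _, contDiff_const, fun v => ?_⟩
    filter_upwards [(memLp_top_const (μ := μ) (1 : ℝ)).coeFn_toLp] with x hx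
    simp [hx]
  | succ k ih =>
    intro q hq1 hq
    have hle : (k : ℝ≥0∞) * (m : ℝ≥0∞)⁻¹ ≤ 1 := by
      have h1 : q⁻¹ ≤ 1 := ENNReal.inv_le_one.2 hq1.out
      refine le_trans ?_ h1
      rw [hq]
      gcongr
      simp
    have : Fact (1 ≤ ((k : ℝ≥0∞) * (m : ℝ≥0∞)⁻¹)⁻¹) := ⟨ENNReal.one_le_inv.2 hle⟩
    have : Fact (1 ≤ (m : ℝ≥0∞)) := ⟨by exact_mod_cast hm⟩
    obtain ⟨f, hf, hfe⟩ := ih (((k : ℝ≥0∞) * (m : ℝ≥0∞)⁻¹)⁻¹) (inv_inv _)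
    have : ENNReal.HolderTriple (p : ℝ≥0∞) (p : ℝ≥0∞) (m : ℝ≥0∞) := ⟨by
      have : (p : ℝ≥0∞) = 2 * m := by rw [hpm]; push_cast; ring
      rw [this, ENNReal.mul_inv (by simp) (by simp), ← add_mul, ENNReal.inv_two_add_inv_two,
        one_mul]⟩
    have : ENNReal.HolderTriple (((k : ℝ≥0∞) * (m : ℝ≥0∞)⁻¹)⁻¹) (m : ℝ≥0∞) q := ⟨by
      rw [inv_inv, hq]; push_cast; ring⟩
    let B := (innerSL ℝ : E →L[ℝ] E →L[ℝ] ℝ).holderL μ (p : ℝ≥0∞) (p : ℝ≥0∞) (m : ℝ≥0∞)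
    let C := (ContinuousLinearMap.mul ℝ ℝ).holderL μ
      (((k : ℝ≥0∞) * (m : ℝ≥0∞)⁻¹)⁻¹) (m : ℝ≥0∞) q
    refine ⟨fun v => C (f v) (B v v), ?_, fun v => ?_⟩
    · exact (C.contDiff.comp hf).clm_apply (B.contDiff.clm_apply contDiff_id)
    · have h1 := (ContinuousLinearMap.mul ℝ ℝ).coeFn_holder (r := q) (f v) (B v v)
      have h2 := (innerSL ℝ : E →L[ℝ] E →L[ℝ] ℝ).coeFn_holder (r := (m : ℝ≥0∞)) v v
      filter_upwards [h1, h2, hfe v] with x h1 h2 h3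
      refine h1.trans ?_
      have h2' : (B v v : α → ℝ) x = ‖v x‖ ^ 2 := by
        refine h2.trans ?_
        exact real_inner_self_eq_norm_sq (v x)
      rw [h2', h3]
      simp only [ContinuousLinearMap.mul_apply']
      ring

/-- Existence of smooth cut-off functions (Remark 4.5, fulfilling Assumption 3.1/3.6 for
the local stabilizations): for every even integer `p > 2` and every `ε > 0` there is a
`C^∞` function `β : L^p(α, μ; E) → [0, 1]` with `β ≡ 1` on the open `ε/3`-ball and
`β ≡ 0` outside the closed `2ε/3`-ball. -/
theorem smooth_cutoff_exists
    {α : Type*} [MeasurableSpace α] (μ : Measure α)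
    {E : Type*} [NormedAddCommGroup E] [InnerProductSpace ℝ E] [FiniteDimensional ℝ E]
    (p : ℕ) (hp : 2 < p) (hpe : Even p) [Fact (1 ≤ (p : ℝ≥0∞))]
    (ε : ℝ) (hε : 0 < ε) :
    ∃ β : Lp E (p : ℝ≥0∞) μ → ℝ,
      ContDiff ℝ (⊤ : ℕ∞) β ∧
      (∀ v, β v ∈ Set.Icc (0 : ℝ) 1) ∧
      (∀ v, ‖v‖ < ε / 3 → β v = 1) ∧
      (∀ v, 2 * ε / 3 < ‖v‖ → β v = 0) := by
  obtain ⟨m, hm⟩ := hpe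
  have hm1 : 1 ≤ m := by omega
  have hp0 : p ≠ 0 := by omega
  obtain ⟨f, hf, hfe⟩ := cutoff_aux (E := E) μ p m hm1 hm m 1 (by
    rw [ENNReal.mul_inv_cancel (by simp; omega) (by simp), inv_one])
  have hN : ∀ v, L1.integralCLM (f v) = ‖v‖ ^ p := by
    intro v
    rw [← L1.integral_eq, L1.integral_eq_integral, integral_congr_ae (hfe v)]
    have h := (Lp.memLp v).eLpNorm_eq_integral_rpow_norm (by exact_mod_cast hp0) (by simp)
    have hnn : 0 ≤ ∫ a, ‖v a‖ ^ p ∂μ := integral_nonneg fun _ => by positivity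
    rw [Lp.norm_def, h, ENNReal.toReal_ofReal (by positivity)]
    simp only [ENNReal.toReal_natCast, Real.rpow_natCast]
    rw [Real.rpow_inv_natCast_pow hnn hp0, show 2 * m = p by omega]
  have hab : (ε / 3) ^ p < (2 * ε / 3) ^ p :=
    pow_lt_pow_left₀ (by linarith) (by positivity) hp0
  refine ⟨fun v => Real.smoothTransition
    (((2 * ε / 3) ^ p - L1.integralCLM (f v)) / ((2 * ε / 3) ^ p - (ε / 3) ^ p)), ?_, ?_, ?_, ?_⟩
  · refine Real.smoothTransition.contDiff.comp (ContDiff.div_const (contDiff_const.sub ?_) _)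
    exact (L1.integralCLM (α := α) (E := ℝ) (μ := μ)).contDiff.comp hf
  · exact fun v => ⟨Real.smoothTransition.nonneg _, Real.smoothTransition.le_one _⟩
  · intro v hv
    apply Real.smoothTransition.one_of_one_le
    rw [hN, one_le_div (by linarith)]
    have := pow_le_pow_left₀ (norm_nonneg v) hv.le p
    linarith
  · intro v hv
    apply Real.smoothTransition.zero_of_nonpos
    have := pow_le_pow_left₀ (by positivity) hv.le p
    rw [hN]
    exact div_nonpos_of_nonpos_of_nonneg (by linarith) (by linarith)
end
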